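/- For every t > 0 and every v₀ > 0, one has ∫_{[v₀,∞)} v μ^{ℓ,r}_t(dv) ≤ (E[R^γ]/(γ−1)²)·t·v₀^{1−γ}. -/

import Mathlib

open MeasureTheory Filter Set
open scoped ENNReal NNReal Topology

noncomputable section

/-- `ℓ_t(s,u)`: the length of the interval `[s,s+u] ∩ [0,t]`. -/
def ellK (t s u : ℝ) : ℝ := max 0 (min (s + u) t - max s 0)

/-- The intensity measure `u^{-γ-1} du` on `(0,∞)`. -/
def muU (γ : ℝ) : Measure ℝ :=
  (volume.restrict (Set.Ioi 0)).withDensity fun u => ENNReal.ofReal (u ^ (-γ - 1))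

/-- The measure `μ^ℓ_t` on `(0,∞)`:
`μ^ℓ_t(A) = ∫_ℝ ∫_0^∞ 1{ℓ_t(s,u) ∈ A} u^{-γ-1} du ds`. -/
def muEll (γ t : ℝ) : Measure ℝ :=
  (Measure.map (fun p : ℝ × ℝ => ellK t p.1 p.2)
    ((volume : Measure ℝ).prod (muU γ))).restrict (Set.Ioi 0)

/-- The measure `μ^{ℓ,r}_t` on `(0,∞)`:
`μ^{ℓ,r}_t(A) = ∫_{(0,∞)} ∫_{(0,∞)} 1{rℓ ∈ A} μ^ℓ_t(dℓ) F_R(dr)`. -/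
def muEllR (γ t : ℝ) (FR : Measure ℝ) : Measure ℝ :=
  (Measure.map (fun p : ℝ × ℝ => p.1 * p.2) (FR.prod (muEll γ t))).restrict (Set.Ioi 0)

/-- The measure `ν` on `[0,1]`: density `s^{-(γ+1)} + ((2-γ)/γ)·s^{-γ}` on `(0,1)` with
respect to Lebesgue measure, together with an atom of mass `1/(γ(γ-1))` at the point `1`. -/
def nuM (γ : ℝ) : Measure ℝ :=
  (volume.restrict (Set.Ioo 0 1)).withDensity
      (fun s => ENNReal.ofReal (s ^ (-(γ + 1)) + (2 - γ) / γ * s ^ (-γ)))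
    + (Real.toNNReal (1 / (γ * (γ - 1)))) • Measure.dirac 1

instance nuM.sigmaFinite (γ : ℝ) : SigmaFinite (nuM γ) := by
  unfold nuM; infer_instance

end

/-!
An interval `[s, s + u]` meets `[0, t]` in length at most `u`, so only durations `u ≥ a` contribute
to lengths `ℓ ≥ a`, and by Tonelli `∫ ℓ_t(s, u) ds = t u`. Hence the first moment of `μ^ℓ_t` on
`[a, ∞)` is at most `t ∫_a^∞ u · u^{-γ-1} du = t a^{1-γ} / (γ - 1)`. Scaling by `R = r` replaces
`a` by `v₀ / r` and multiplies by `r`, which produces the factor `r^γ`. Finally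
`1 / (γ - 1) ≤ 1 / (γ - 1)²` because `γ < 2`.
-/

section IntervalOverlap

lemma lintegral_measure_Icc_add_right (μ : Measure ℝ) [SFinite μ] (u : ℝ) :
    ∫⁻ s, μ (Icc s (s + u)) = ENNReal.ofReal u * μ univ := by
  let S : Set (ℝ × ℝ) := {p | p.1 ≤ p.2 ∧ p.2 ≤ p.1 + u}
  have hS : MeasurableSet S :=
    (measurableSet_le measurable_fst measurable_snd).inter
      (measurableSet_le measurable_snd (measurable_fst.add_const u))
  have symm_section (x : ℝ) : (fun s ↦ (s, x)) ⁻¹' S = Icc (x - u) x := by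
    ext s
    simp [S, and_comm]
  calc ∫⁻ s, μ (Icc s (s + u)) = (volume.prod μ) S := (Measure.prod_apply hS).symm
    _ = ∫⁻ x, volume ((fun s ↦ (s, x)) ⁻¹' S) ∂μ := Measure.prod_apply_symm hS
    _ = ENNReal.ofReal u * μ univ := by simp [symm_section]

lemma ofReal_ellK (t s u : ℝ) :
    ENNReal.ofReal (ellK t s u) = volume.restrict (Icc 0 t) (Icc s (s + u)) := by
  rw [Measure.restrict_apply measurableSet_Icc, Icc_inter_Icc, Real.volume_Icc, ellK,
    ENNReal.ofReal_max, ENNReal.ofReal_zero]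
  exact max_eq_right zero_le

lemma lintegral_ofReal_ellK (t u : ℝ) :
    ∫⁻ s, ENNReal.ofReal (ellK t s u) = ENNReal.ofReal t * ENNReal.ofReal u := by
  simp only [ofReal_ellK, lintegral_measure_Icc_add_right, Measure.restrict_apply_univ,
    Real.volume_Icc, sub_zero, mul_comm]

lemma ellK_le_max (t s u : ℝ) : ellK t s u ≤ max 0 u :=
  max_le_max_left 0 (by linarith [min_le_left (s + u) t, le_max_left s 0])

lemma measurable_ellK (t : ℝ) : Measurable fun p : ℝ × ℝ ↦ ellK t p.1 p.2 := by
  unfold ellK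
  fun_prop

end IntervalOverlap

section LengthMeasure

instance muU.sFinite (γ : ℝ) : SFinite (muU γ) := by
  unfold muU
  infer_instance

instance muEll.sFinite (γ t : ℝ) : SFinite (muEll γ t) := by
  unfold muEll
  infer_instance

lemma ae_muEll_pos (γ t : ℝ) : ∀ᵐ l ∂muEll γ t, 0 < l :=
  ae_restrict_mem measurableSet_Ioi

lemma setLIntegral_Ici_rpow {p a : ℝ} (hp : p < -1) (ha : 0 < a) :
    ∫⁻ u in Ici a, ENNReal.ofReal (u ^ p) = ENNReal.ofReal (-a ^ (p + 1) / (p + 1)) := by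
  have h_nonneg : 0 ≤ᵐ[volume.restrict (Ioi a)] fun u ↦ u ^ p := by
    filter_upwards [ae_restrict_mem measurableSet_Ioi] with u hu
    exact Real.rpow_nonneg (ha.trans hu).le p
  rw [setLIntegral_congr Ioi_ae_eq_Ici.symm,
    ← ofReal_integral_eq_lintegral_ofReal (integrableOn_Ioi_rpow_of_lt hp ha) h_nonneg,
    integral_Ioi_rpow_of_lt hp ha]

lemma setLIntegral_Ici_muU {γ : ℝ} (hγ : 1 < γ) {a : ℝ} (ha : 0 < a) :
    ∫⁻ u in Ici a, ENNReal.ofReal u ∂muU γ = ENNReal.ofReal (a ^ (1 - γ) / (γ - 1)) := by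
  have density_mul : ∀ u ∈ Ici a,
      ENNReal.ofReal (u ^ (-γ - 1)) * ENNReal.ofReal u = ENNReal.ofReal (u ^ (-γ)) := by
    intro u hu
    have hu_pos : 0 < u := ha.trans_le hu
    rw [← ENNReal.ofReal_mul (by positivity), ← Real.rpow_add_one hu_pos.ne', sub_add_cancel]
  rw [muU, restrict_withDensity measurableSet_Ici,
    Measure.restrict_restrict_of_subset (Ici_subset_Ioi.2 ha),
    lintegral_withDensity_eq_lintegral_mul _ (by fun_prop) (by fun_prop)]
  simp only [Pi.mul_apply]
  rw [setLIntegral_congr_fun measurableSet_Ici density_mul,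
    setLIntegral_Ici_rpow (by linarith) ha, neg_add_eq_sub, ← neg_sub γ 1, neg_div_neg_eq]

lemma setLIntegral_Ici_muEll_le {γ : ℝ} (hγ : 1 < γ) (t : ℝ) {a : ℝ} (ha : 0 < a) :
    ∫⁻ l in Ici a, ENNReal.ofReal l ∂muEll γ t
      ≤ ENNReal.ofReal t * ENNReal.ofReal (a ^ (1 - γ) / (γ - 1)) := by
  have duration_ge : (fun p : ℝ × ℝ ↦ ellK t p.1 p.2) ⁻¹' Ici a ⊆ univ ×ˢ Ici a := fun p hp ↦
    ⟨trivial, (le_max_iff.1 (le_trans hp (ellK_le_max t p.1 p.2))).resolve_left ha.not_ge⟩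
  calc ∫⁻ l in Ici a, ENNReal.ofReal l ∂muEll γ t
    _ = ∫⁻ p in (fun p : ℝ × ℝ ↦ ellK t p.1 p.2) ⁻¹' Ici a,
          ENNReal.ofReal (ellK t p.1 p.2) ∂(volume.prod (muU γ)) := by
        rw [muEll, Measure.restrict_restrict_of_subset (Ici_subset_Ioi.2 ha),
          setLIntegral_map measurableSet_Ici (by fun_prop) (measurable_ellK t)]
    _ ≤ ∫⁻ p in univ ×ˢ Ici a, ENNReal.ofReal (ellK t p.1 p.2) ∂(volume.prod (muU γ)) :=
        lintegral_mono_set duration_ge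
    _ = ∫⁻ u in Ici a, (∫⁻ s, ENNReal.ofReal (ellK t s u)) ∂muU γ := by
        rw [← Measure.prod_restrict, Measure.restrict_univ,
          lintegral_prod_symm' _ (measurable_ellK t).ennreal_ofReal]
    _ = ENNReal.ofReal t * ENNReal.ofReal (a ^ (1 - γ) / (γ - 1)) := by
        simp only [lintegral_ofReal_ellK]
        rw [lintegral_const_mul _ (by fun_prop), setLIntegral_Ici_muU hγ ha]

lemma mul_div_rpow_one_sub {r v : ℝ} (hr : 0 < r) (hv : 0 ≤ v) (γ : ℝ) :
    r * (v / r) ^ (1 - γ) = r ^ γ * v ^ (1 - γ) := by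
  rw [Real.div_rpow hv hr.le, Real.rpow_sub hr, Real.rpow_one]
  field_simp

lemma ofReal_mul_setLIntegral_Ici_div_muEll_le {γ : ℝ} (hγ : 1 < γ) (t : ℝ) {r v : ℝ}
    (hr : 0 < r) (hv : 0 < v) :
    ENNReal.ofReal r * ∫⁻ l in Ici (v / r), ENNReal.ofReal l ∂muEll γ t
      ≤ ENNReal.ofReal (r ^ γ) * ENNReal.ofReal (v ^ (1 - γ) / (γ - 1) * t) := by
  have : 0 < γ - 1 := sub_pos.2 hγ
  calc ENNReal.ofReal r * ∫⁻ l in Ici (v / r), ENNReal.ofReal l ∂muEll γ t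
    _ ≤ ENNReal.ofReal r *
          (ENNReal.ofReal t * ENNReal.ofReal ((v / r) ^ (1 - γ) / (γ - 1))) := by
        gcongr
        exact setLIntegral_Ici_muEll_le hγ t (div_pos hv hr)
    _ = ENNReal.ofReal (r * (v / r) ^ (1 - γ) / (γ - 1)) * ENNReal.ofReal t := by
        rw [mul_left_comm, ← ENNReal.ofReal_mul hr.le, ← mul_div_assoc, mul_comm]
    _ = ENNReal.ofReal (r ^ γ) * ENNReal.ofReal (v ^ (1 - γ) / (γ - 1) * t) := by
        rw [mul_div_rpow_one_sub hr hv.le, mul_div_assoc, ENNReal.ofReal_mul (by positivity),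
          mul_assoc, ← ENNReal.ofReal_mul (by positivity)]

end LengthMeasure

section RandomScaling

lemma lintegral_indicator_Ici_const_mul {ν : Measure ℝ} (hν : ∀ᵐ l ∂ν, 0 < l)
    {v : ℝ} (hv : 0 < v) (r : ℝ) :
    ∫⁻ l, (Ici v).indicator ENNReal.ofReal (r * l) ∂ν
      = (Ioi 0).indicator
          (fun r ↦ ENNReal.ofReal r * ∫⁻ l in Ici (v / r), ENNReal.ofReal l ∂ν) r := by
  by_cases hr : 0 < r
  · have rescale (l : ℝ) : (Ici v).indicator ENNReal.ofReal (r * l)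
        = ENNReal.ofReal r * (Ici (v / r)).indicator ENNReal.ofReal l := by
      simp only [indicator_apply, mem_Ici, div_le_iff₀' hr, mul_ite, mul_zero,
        ENNReal.ofReal_mul hr.le]
    rw [indicator_of_mem (mem_Ioi.2 hr), ← lintegral_indicator measurableSet_Ici]
    simp only [rescale]
    exact lintegral_const_mul' _ _ ENNReal.ofReal_ne_top
  · rw [indicator_of_notMem (mem_Ioi.not.2 hr)]
    refine lintegral_eq_zero_of_ae_eq_zero ?_
    filter_upwards [hν] with l hl
    exact indicator_of_notMem (not_le.2 <|
      (mul_nonpos_of_nonpos_of_nonneg (not_lt.1 hr) hl.le).trans_lt hv) _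

lemma setLIntegral_Ici_map_mul_prod (μ : Measure ℝ) {ν : Measure ℝ} [SFinite ν]
    (hν : ∀ᵐ l ∂ν, 0 < l) {v : ℝ} (hv : 0 < v) :
    ∫⁻ x in Ici v, ENNReal.ofReal x ∂((μ.prod ν).map fun p ↦ p.1 * p.2)
      = ∫⁻ r in Ioi 0, ENNReal.ofReal r * ∫⁻ l in Ici (v / r), ENNReal.ofReal l ∂ν ∂μ := by
  have h_meas : Measurable ((Ici v).indicator ENNReal.ofReal) :=
    ENNReal.measurable_ofReal.indicator measurableSet_Ici
  calc ∫⁻ x in Ici v, ENNReal.ofReal x ∂((μ.prod ν).map fun p ↦ p.1 * p.2)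
    _ = ∫⁻ p, (Ici v).indicator ENNReal.ofReal (p.1 * p.2) ∂(μ.prod ν) := by
        rw [← lintegral_indicator measurableSet_Ici, lintegral_map h_meas measurable_mul]
    _ = ∫⁻ r, ∫⁻ l, (Ici v).indicator ENNReal.ofReal (r * l) ∂ν ∂μ :=
        lintegral_prod _ (h_meas.comp measurable_mul).aemeasurable
    _ = ∫⁻ r in Ioi 0, ENNReal.ofReal r * ∫⁻ l in Ici (v / r), ENNReal.ofReal l ∂ν ∂μ := by
        simp only [lintegral_indicator_Ici_const_mul hν hv, lintegral_indicator measurableSet_Ioi]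

lemma setLIntegral_Ici_muEllR (γ t : ℝ) (FR : Measure ℝ) {v : ℝ} (hv : 0 < v) :
    ∫⁻ x in Ici v, ENNReal.ofReal x ∂muEllR γ t FR
      = ∫⁻ r in Ioi 0, ENNReal.ofReal r *
          ∫⁻ l in Ici (v / r), ENNReal.ofReal l ∂muEll γ t ∂FR := by
  rw [muEllR, Measure.restrict_restrict_of_subset (Ici_subset_Ioi.2 hv),
    setLIntegral_Ici_map_mul_prod FR (ae_muEll_pos γ t) hv]

theorem stmt_13_general {γ : ℝ} (hγ : 1 < γ) {FR : Measure ℝ}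
    (hmom : IntegrableOn (fun r ↦ r ^ γ) (Ioi 0) FR) (t : ℝ) {v₀ : ℝ} (hv₀ : 0 < v₀) :
    ∫⁻ v in Ici v₀, ENNReal.ofReal v ∂muEllR γ t FR
      ≤ ENNReal.ofReal ((∫ r in Ioi 0, r ^ γ ∂FR) / (γ - 1) * t * v₀ ^ (1 - γ)) := by
  have h_nonneg : 0 ≤ᵐ[FR.restrict (Ioi 0)] fun r ↦ r ^ γ := by
    filter_upwards [ae_restrict_mem measurableSet_Ioi] with r hr
    exact Real.rpow_nonneg (mem_Ioi.1 hr).le γ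
  calc ∫⁻ v in Ici v₀, ENNReal.ofReal v ∂muEllR γ t FR
    _ ≤ ∫⁻ r in Ioi 0,
          ENNReal.ofReal (r ^ γ) * ENNReal.ofReal (v₀ ^ (1 - γ) / (γ - 1) * t) ∂FR := by
        rw [setLIntegral_Ici_muEllR γ t FR hv₀]
        exact setLIntegral_mono (by fun_prop) fun r hr ↦
          ofReal_mul_setLIntegral_Ici_div_muEll_le hγ t hr hv₀
    _ = ENNReal.ofReal (∫ r in Ioi 0, r ^ γ ∂FR)
          * ENNReal.ofReal (v₀ ^ (1 - γ) / (γ - 1) * t) := by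
        rw [lintegral_mul_const _ (by fun_prop),
          ofReal_integral_eq_lintegral_ofReal hmom h_nonneg]
    _ = ENNReal.ofReal ((∫ r in Ioi 0, r ^ γ ∂FR) / (γ - 1) * t * v₀ ^ (1 - γ)) := by
        rw [← ENNReal.ofReal_mul (integral_nonneg_of_ae h_nonneg)]
        congr 1
        ring

end RandomScaling

/-- For every `t > 0`, `v₀ > 0`:
`∫_{[v₀,∞)} v μ^{ℓ,r}_t(dv) ≤ (E[R^γ]/(γ-1)²)·t·v₀^{1-γ}`. -/
theorem stmt_13 (γ : ℝ) (hγ1 : 1 < γ) (hγ2 : γ < 2)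
    (FR : Measure ℝ) [IsProbabilityMeasure FR] (hFRpos : FR (Set.Iic 0) = 0)
    (hmom : Integrable (fun r => r ^ γ) FR)
    (t : ℝ) (ht : 0 < t) (v0 : ℝ) (hv0 : 0 < v0) :
    ∫⁻ v in Set.Ici v0, ENNReal.ofReal v ∂(muEllR γ t FR)
      ≤ ENNReal.ofReal ((∫ r, r ^ γ ∂FR) / (γ - 1) ^ 2 * t * v0 ^ (1 - γ)) := by
  have hFR : FR.restrict (Ioi 0) = FR :=
    Measure.restrict_eq_self_of_ae_mem (by simpa [ae_iff] using! hFRpos)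
  have h_moment : 0 ≤ ∫ r, r ^ γ ∂FR :=
    hFR ▸ setIntegral_nonneg measurableSet_Ioi fun r hr ↦ Real.rpow_nonneg (le_of_lt hr) γ
  have : 0 < γ - 1 := sub_pos.2 hγ1
  have sq_le_self : (γ - 1) ^ 2 ≤ γ - 1 :=
    pow_le_of_le_one this.le (by linarith) two_ne_zero
  calc ∫⁻ v in Ici v0, ENNReal.ofReal v ∂muEllR γ t FR
    _ ≤ ENNReal.ofReal ((∫ r, r ^ γ ∂FR) / (γ - 1) * t * v0 ^ (1 - γ)) := by
        simpa only [hFR] using stmt_13_general hγ1 hmom.integrableOn t hv0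
    _ ≤ ENNReal.ofReal ((∫ r, r ^ γ ∂FR) / (γ - 1) ^ 2 * t * v0 ^ (1 - γ)) := by
        gcongr
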